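/- Fix natural numbers n ≥ 1, d ≥ 2 and T, and a real α ≥ 0 with (T : ℝ) ≥ 4·α·d·Real.log n. Let μ be the product probability measure on Fin n → Bool with independent coordinates each equal to true with probability 1 - 1/d, and let ν be the product over Fin T of μ. Let ι be a finite index type with card ι ≤ n·(n-1)/2, and for each e : ι let i_e : Fin n and P_e a finite subset of Fin n with i_e ∉ P_e and (P_e).card ≤ d. Then ν {ω | ∃ e : ι, ∀ t : Fin T, ¬(ω t (i_e) = false ∧ ∀ j ∈ P_e, ω t j = true)} ≤ (n : ℝ)^(2 - α). -/

import Mathlib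

/-!
A single edge `(i, P)` is discovered in one round with probability
`(1/d) (1 - 1/d) ^ |P| ≥ (1/d) (1 - 1/d) ^ d ≥ 1 / (4 d)`, by independence of the coordinates
(`i ∉ P`) and the bound `(1 - 1/d) ^ d ≥ 1/4` for `d ≥ 2` (`quarter_le_one_sub_inv_pow`).
By independence of the rounds, it is missed in all of them with probability at most
`(1 - 1/(4 d)) ^ T ≤ exp (-T / (4 d)) ≤ n ^ (-α)`. The union bound over at most `n ^ 2` edges
gives `n ^ (2 - α)`.
-/

open MeasureTheory ENNReal

/-- The measure on `Bool` assigning probability `1 - 1/d` to `true` and `1/d` to `false`: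
the distribution of the indicator of "variable included in the random intervention set". -/
noncomputable def bernoulliInclusion (d : ℕ) : Measure Bool :=
  (1 / (d : ℝ≥0∞)) • Measure.dirac false + (1 - 1 / (d : ℝ≥0∞)) • Measure.dirac true

/-- One round of the randomized intervention-selection algorithm: the product measure on
`Fin n → Bool` whose coordinates are independent, each equal to `true` with
probability `1 - 1/d`. -/
noncomputable def interventionRound (n d : ℕ) : Measure (Fin n → Bool) :=
  Measure.pi fun _ : Fin n => bernoulliInclusion d

/-- `T` independent rounds of the randomized intervention-selection algorithm. -/
noncomputable def interventionRounds (n d T : ℕ) : Measure (Fin T → Fin n → Bool) :=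
  Measure.pi fun _ : Fin T => interventionRound n d

/-- Bernoulli's inequality with the real exponent `d / 2 ≥ 1` gives `(1 - 1/d) ^ (d/2) ≥ 1/2`;
squaring gives the claim. -/
lemma quarter_le_one_sub_inv_pow (d : ℕ) (hd : 2 ≤ d) :
    (1 / 4 : ℝ) ≤ (1 - 1 / (d : ℝ)) ^ d := by
  have hd' : (2 : ℝ) ≤ d := by exact_mod_cast hd
  have hinv : 1 / (d : ℝ) ≤ 1 := by
    rw [div_le_one (by linarith)]; linarith
  have hb := one_add_mul_self_le_rpow_one_add (s := -(1 / (d : ℝ))) (by linarith)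
    (p := (d : ℝ) / 2) (by linarith)
  have hhalf : 1 + (d : ℝ) / 2 * -(1 / (d : ℝ)) = 1 / 2 := by
    field_simp; norm_num
  rw [hhalf, ← sub_eq_add_neg] at hb
  have hsq : ((1 - 1 / (d : ℝ)) ^ ((d : ℝ) / 2)) ^ 2 = (1 - 1 / (d : ℝ)) ^ d := by
    rw [← Real.rpow_natCast, ← Real.rpow_mul (by linarith), ← Real.rpow_natCast]
    congr 1
    push_cast
    ring
  rw [← hsq]
  nlinarith

lemma bernoulliInclusion_singleton_false (d : ℕ) :
    bernoulliInclusion d {false} = 1 / (d : ℝ≥0∞) := by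
  simp [bernoulliInclusion]

lemma bernoulliInclusion_singleton_true (d : ℕ) :
    bernoulliInclusion d {true} = 1 - 1 / (d : ℝ≥0∞) := by
  simp [bernoulliInclusion]

lemma isProbabilityMeasure_bernoulliInclusion (d : ℕ) (hd : 2 ≤ d) :
    IsProbabilityMeasure (bernoulliInclusion d) := by
  refine ⟨?_⟩
  have h : 1 / (d : ℝ≥0∞) ≤ 1 := by
    rw [one_div, ENNReal.inv_le_one]
    exact_mod_cast (by omega : 1 ≤ d)
  simp only [bernoulliInclusion, Measure.add_apply, Measure.smul_apply, measure_univ,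
    smul_eq_mul, mul_one]
  exact add_tsub_cancel_of_le h

lemma isProbabilityMeasure_interventionRound (n d : ℕ) (hd : 2 ≤ d) :
    IsProbabilityMeasure (interventionRound n d) := by
  have := isProbabilityMeasure_bernoulliInclusion d hd
  unfold interventionRound
  infer_instance

lemma interventionRound_discovery (n d : ℕ) (hd : 2 ≤ d) (i : Fin n) (P : Finset (Fin n))
    (hiP : i ∉ P) :
    interventionRound n d {x | x i = false ∧ ∀ j ∈ P, x j = true} =
      1 / (d : ℝ≥0∞) * (1 - 1 / (d : ℝ≥0∞)) ^ P.card := by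
  have := isProbabilityMeasure_bernoulliInclusion d hd
  have hset : {x : Fin n → Bool | x i = false ∧ ∀ j ∈ P, x j = true} =
      Set.univ.pi fun j => if j = i then {false} else if j ∈ P then {true} else Set.univ := by
    ext x
    simp only [Set.mem_ofPred_eq, Set.mem_pi, Set.mem_univ, true_implies]
    constructor
    · rintro ⟨h1, h2⟩ j
      split_ifs with hj hj'
      · subst hj; exact h1
      · exact h2 j hj'
      · trivial
    · intro h
      refine ⟨by simpa using h i, fun j hj => ?_⟩
      have hji : j ≠ i := fun hji => hiP (hji ▸ hj)
      simpa [hji, hj] using h j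
  have hfac : ∀ j : Fin n, bernoulliInclusion d
      (if j = i then {false} else if j ∈ P then {true} else Set.univ) =
      (if j = i then 1 / (d : ℝ≥0∞) else 1) * (if j ∈ P then 1 - 1 / (d : ℝ≥0∞) else 1) := by
    intro j
    by_cases hj : j = i
    · subst hj
      simp [hiP, bernoulliInclusion_singleton_false]
    · by_cases hj' : j ∈ P
      · simp [hj, hj', bernoulliInclusion_singleton_true]
      · simp only [hj, hj', if_false, measure_univ, mul_one]
  rw [hset, interventionRound, Measure.pi_pi, Finset.prod_congr rfl fun j _ => hfac j,
    Finset.prod_mul_distrib]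
  simp

lemma interventionRound_miss_le (n d : ℕ) (hd : 2 ≤ d) (i : Fin n) (P : Finset (Fin n))
    (hiP : i ∉ P) (hP : P.card ≤ d) :
    interventionRound n d {x | ¬(x i = false ∧ ∀ j ∈ P, x j = true)} ≤
      ENNReal.ofReal (1 - 1 / (4 * d)) := by
  have := isProbabilityMeasure_interventionRound n d hd
  have hd' : (2 : ℝ) ≤ d := by exact_mod_cast hd
  have hinv : 1 / (d : ℝ) ≤ 1 := by
    rw [div_le_one (by linarith)]; linarith
  have hinv0 : 0 < 1 / (d : ℝ) := by positivity
  have hcast : 1 / (d : ℝ≥0∞) = ENNReal.ofReal (1 / d) := by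
    rw [ENNReal.ofReal_div_of_pos (by linarith)]
    simp
  have hge : ENNReal.ofReal (1 / (4 * d)) ≤
      interventionRound n d {x | x i = false ∧ ∀ j ∈ P, x j = true} := by
    rw [interventionRound_discovery n d hd i P hiP, hcast, ← ENNReal.ofReal_one,
      ← ENNReal.ofReal_sub _ hinv0.le, ← ENNReal.ofReal_pow (by linarith),
      ← ENNReal.ofReal_mul hinv0.le]
    refine ENNReal.ofReal_le_ofReal ?_
    have hpow : (1 / 4 : ℝ) ≤ (1 - 1 / (d : ℝ)) ^ P.card :=
      (quarter_le_one_sub_inv_pow d hd).trans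
        (pow_le_pow_of_le_one (by linarith) (by linarith) hP)
    calc 1 / (4 * (d : ℝ)) = 1 / d * (1 / 4) := by field_simp
      _ ≤ _ := mul_le_mul_of_nonneg_left hpow hinv0.le
  have hcompl : {x : Fin n → Bool | ¬(x i = false ∧ ∀ j ∈ P, x j = true)} =
      {x | x i = false ∧ ∀ j ∈ P, x j = true}ᶜ := rfl
  rw [hcompl, prob_compl_eq_one_sub (Set.toFinite _).measurableSet,
    ENNReal.ofReal_sub _ (by positivity), ENNReal.ofReal_one]
  exact tsub_le_tsub_left hge 1

lemma interventionRounds_miss_le (n d T : ℕ) (hn : 1 ≤ n) (hd : 2 ≤ d) (α : ℝ)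
    (hT : (T : ℝ) ≥ 4 * α * (d : ℝ) * Real.log n) (i : Fin n) (P : Finset (Fin n))
    (hiP : i ∉ P) (hP : P.card ≤ d) :
    interventionRounds n d T {ω | ∀ t : Fin T, ¬(ω t i = false ∧ ∀ j ∈ P, ω t j = true)} ≤
      ENNReal.ofReal ((n : ℝ) ^ (-α)) := by
  have := isProbabilityMeasure_interventionRound n d hd
  have hd' : (2 : ℝ) ≤ d := by exact_mod_cast hd
  have hn' : (0 : ℝ) < n := by exact_mod_cast hn
  have hset : {ω : Fin T → Fin n → Bool | ∀ t, ¬(ω t i = false ∧ ∀ j ∈ P, ω t j = true)} =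
      Set.univ.pi fun _ => {x | ¬(x i = false ∧ ∀ j ∈ P, x j = true)} := by
    ext ω
    simp [Set.mem_pi]
  have hnonneg : 0 ≤ 1 - 1 / (4 * (d : ℝ)) := by
    rw [sub_nonneg, div_le_one (by linarith)]; linarith
  rw [hset, interventionRounds, Measure.pi_pi, Finset.prod_const, Finset.card_univ,
    Fintype.card_fin]
  refine (pow_le_pow_left' (interventionRound_miss_le n d hd i P hiP hP) T).trans ?_
  rw [← ENNReal.ofReal_pow hnonneg]
  refine ENNReal.ofReal_le_ofReal ?_
  calc (1 - 1 / (4 * (d : ℝ))) ^ T ≤ Real.exp (-(1 / (4 * (d : ℝ)))) ^ T :=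
        pow_le_pow_left₀ hnonneg (Real.one_sub_le_exp_neg _) T
    _ = Real.exp (-(T / (4 * (d : ℝ)))) := by
        rw [← Real.exp_nat_mul]; congr 1; ring
    _ ≤ (n : ℝ) ^ (-α) := by
        rw [Real.rpow_def_of_pos hn', Real.exp_le_exp]
        have : α * Real.log n ≤ T / (4 * (d : ℝ)) := by
          rw [le_div_iff₀ (by linarith)]; linarith
        linarith

/-- For `n ≥ 1`, `d ≥ 2`, `α ≥ 0` and `(T : ℝ) ≥ 4·α·d·log n`: given at
most `n(n-1)/2` pairs `(i_e, P_e)` (encoding the directed edges of the causal graph together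
with the parents that must be intervened on to discover them), each with `i_e ∉ P_e` and
`(P_e).card ≤ d`, the probability that some pair fails in all of the `T` independent rounds
is at most `(n : ℝ) ^ (2 - α)` (real power). -/
theorem interventionRounds_union_bound_edges (n d T : ℕ) (hn : 1 ≤ n) (hd : 2 ≤ d)
    (α : ℝ) (hα : 0 ≤ α) (hT : (T : ℝ) ≥ 4 * α * (d : ℝ) * Real.log n)
    (ι : Type) [Fintype ι] (hι : Fintype.card ι ≤ n * (n - 1) / 2)
    (i : ι → Fin n) (P : ι → Finset (Fin n))
    (hiP : ∀ e : ι, i e ∉ P e) (hPcard : ∀ e : ι, (P e).card ≤ d) :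
    interventionRounds n d T
        {ω | ∃ e : ι, ∀ t : Fin T, ¬(ω t (i e) = false ∧ ∀ j ∈ P e, ω t j = true)} ≤
      ENNReal.ofReal ((n : ℝ) ^ ((2 : ℝ) - α)) := by
  have hn' : (0 : ℝ) < n := by exact_mod_cast hn
  have hcard : Fintype.card ι ≤ n ^ 2 :=
    hι.trans ((Nat.div_le_self _ _).trans (by rw [sq]; exact Nat.mul_le_mul_left n (n.sub_le 1)))
  have hset : {ω : Fin T → Fin n → Bool |
      ∃ e : ι, ∀ t : Fin T, ¬(ω t (i e) = false ∧ ∀ j ∈ P e, ω t j = true)} =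
      ⋃ e, {ω | ∀ t : Fin T, ¬(ω t (i e) = false ∧ ∀ j ∈ P e, ω t j = true)} := by
    ext ω
    simp only [Set.mem_ofPred_eq, Set.mem_iUnion]
  rw [hset]
  calc _ ≤ ∑ e, interventionRounds n d T
        {ω | ∀ t : Fin T, ¬(ω t (i e) = false ∧ ∀ j ∈ P e, ω t j = true)} :=
        measure_iUnion_fintype_le _ _
    _ ≤ ∑ _e : ι, ENNReal.ofReal ((n : ℝ) ^ (-α)) := Finset.sum_le_sum fun e _ =>
        interventionRounds_miss_le n d T hn hd α hT (i e) (P e) (hiP e) (hPcard e)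
    _ = (Fintype.card ι : ℝ≥0∞) * ENNReal.ofReal ((n : ℝ) ^ (-α)) := by
        rw [Finset.sum_const, Finset.card_univ, nsmul_eq_mul]
    _ ≤ ((n ^ 2 : ℕ) : ℝ≥0∞) * ENNReal.ofReal ((n : ℝ) ^ (-α)) := by
        gcongr
    _ = ENNReal.ofReal ((n : ℝ) ^ ((2 : ℝ) - α)) := by
        rw [← ENNReal.ofReal_natCast, ← ENNReal.ofReal_mul (Nat.cast_nonneg _),
          sub_eq_add_neg, Real.rpow_add hn', Real.rpow_two]
        push_cast
        rfl
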